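/- There exists an analytic self-map σ of D with σ(0) = 0 such that: σ ∈ 𝒟_*; σ extends continuously to the closed unit disk (σ ∈ A(D)); σ(1) = 1 and |σ(ξ)| < 1 for every ξ ∈ T with ξ ≠ 1; and the composition operator C_σ is Hilbert–Schmidt on 𝒟_*. -/

import Mathlib

/-!
The self-map is `σ = L / (2 + L)` with `L(z) = -log (1 - z)`, set to `1` at `z = 1`. The logarithm `L`
maps the disk injectively into the half-strip `Re w > -log 2`, `|Im w| < π / 2`, and the Möbius map
`w ↦ w / (2 + w)` sends that half-strip to a domain having a cusp at `1` as its only contact with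
the unit circle.

* Boundedness of `C_σ`: `σ` is injective on the disk, so a change of variables bounds the Dirichlet
  integral of `f ∘ σ` by that of `f` (`sig_bounded`).
* Hilbert–Schmidt: the sum of the squared norms of `σⁿ / √n` is the integral of
  `|σ'|² / (1 - |σ|²)²`. Since `1 - |σ|² = 4 (1 + Re L) / |2 + L|²` and `σ' = 2 L' / (2 + L)²`, the
  integrand is `|L'|² / (4 (1 + Re L)²)` (`tsum_sig_le`). Changing variables by the injective map `L`
  turns this into the integral of a multiple of `(1 + Re w)⁻²` over a half-strip, which converges
  (`lintegral_stripWeight_ne_top`).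
-/


open Complex MeasureTheory Metric Set Filter Topology
open scoped ENNReal NNReal

noncomputable section

/-- Normalized area measure `dA = dx dy / π` on `ℂ`. -/
def nA : Measure ℂ := (ENNReal.ofReal Real.pi)⁻¹ • volume

/-- The open unit disk `D ⊆ ℂ`. -/
def uD : Set ℂ := Metric.ball (0 : ℂ) 1

/-- A Schur function: an analytic self-map of the open unit disk. -/
def IsSchur (φ : ℂ → ℂ) : Prop :=
  DifferentiableOn ℂ φ uD ∧ Set.MapsTo φ uD uD

/-- Squared norm of `f` in the weighted Dirichlet space `𝒟_α`, with value in `[0,∞]`: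
`‖f‖_α² = |f(0)|² + (α+1) ∫_D |f′(z)|² (1−|z|²)^α dA(z)`. -/
def eDNormSqW (α : ℝ) (f : ℂ → ℂ) : ℝ≥0∞ :=
  ENNReal.ofReal (‖f 0‖ ^ 2) +
    ∫⁻ z in uD, ENNReal.ofReal ((α + 1) * ‖deriv f z‖ ^ 2 * (1 - ‖z‖ ^ 2) ^ α) ∂nA

/-- Squared Dirichlet norm: `‖f‖² = |f(0)|² + ∫_D |f′(z)|² dA(z)`. -/
def eDNormSq (f : ℂ → ℂ) : ℝ≥0∞ := eDNormSqW 0 f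

/-- Membership in the weighted Dirichlet space `𝒟_α`. -/
def MemDW (α : ℝ) (f : ℂ → ℂ) : Prop :=
  DifferentiableOn ℂ f uD ∧ eDNormSqW α f < ⊤

/-- Membership in `𝒟_{α,*}`. -/
def MemDWStar (α : ℝ) (f : ℂ → ℂ) : Prop := MemDW α f ∧ f 0 = 0

/-- Membership in the Dirichlet space `𝒟`. -/
def MemD (f : ℂ → ℂ) : Prop := MemDW 0 f

/-- Membership in `𝒟_*`. -/
def MemDStar (f : ℂ → ℂ) : Prop := MemDWStar 0 f

/-- The composition operator `C_φ f = f ∘ φ`. -/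
def compOp (φ : ℂ → ℂ) : (ℂ → ℂ) → ℂ → ℂ := fun f z => f (φ z)

/-- Operator norm of `T` with respect to the space `{f | Mem f}` with squared norm `NSq`:
the least `C` such that `‖T f‖² ≤ C² ‖f‖²` for all `f` in the space (`⊤` if none). -/
def eOpNorm (Mem : (ℂ → ℂ) → Prop) (NSq : (ℂ → ℂ) → ℝ≥0∞)
    (T : (ℂ → ℂ) → ℂ → ℂ) : ℝ≥0∞ :=
  sInf {C : ℝ≥0∞ | ∀ f, Mem f → NSq (T f) ≤ C ^ 2 * NSq f}

/-- The `n`-th approximation number `a_n(T) = inf {‖T − R‖ : rank R < n}`. -/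
def eApproxNum (Mem : (ℂ → ℂ) → Prop) (NSq : (ℂ → ℂ) → ℝ≥0∞)
    (T : (ℂ → ℂ) → ℂ → ℂ) (n : ℕ) : ℝ≥0∞ :=
  sInf {c : ℝ≥0∞ | ∃ R : (ℂ → ℂ) →ₗ[ℂ] (ℂ → ℂ),
    Module.rank ℂ (LinearMap.range R) < (n : Cardinal) ∧
    c = eOpNorm Mem NSq (fun f z => T f z - R f z)}

/-- `T` is a bounded operator on the space `{f | Mem f}` with squared norm `NSq`. -/
def IsBoundedOpOn (Mem : (ℂ → ℂ) → Prop) (NSq : (ℂ → ℂ) → ℝ≥0∞)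
    (T : (ℂ → ℂ) → ℂ → ℂ) : Prop :=
  (∀ f, Mem f → Mem (T f)) ∧ eOpNorm Mem NSq T ≠ ⊤

/-- `T` is a compact operator on the space `{f | Mem f}`: it is bounded and its
approximation numbers tend to `0` (the standard characterization of compactness
for operators on a Hilbert space). -/
def IsCompactOpOn (Mem : (ℂ → ℂ) → Prop) (NSq : (ℂ → ℂ) → ℝ≥0∞)
    (T : (ℂ → ℂ) → ℂ → ℂ) : Prop :=
  IsBoundedOpOn Mem NSq T ∧
    Filter.Tendsto (fun n => eApproxNum Mem NSq T n) Filter.atTop (𝓝 0)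

/-- `T` belongs to the Schatten class `S_p` of the space `{f | Mem f}`:
`Σ_{n≥1} a_n(T)^p < ∞`. -/
def MemSchattenOn (Mem : (ℂ → ℂ) → Prop) (NSq : (ℂ → ℂ) → ℝ≥0∞)
    (T : (ℂ → ℂ) → ℂ → ℂ) (p : ℝ) : Prop :=
  IsBoundedOpOn Mem NSq T ∧
    ∑' n : ℕ, (eApproxNum Mem NSq T (n + 1)) ^ p ≠ ⊤

/-- `C_φ` belongs to the Schatten class `S_p(𝒟_*)`. -/
def MemSchattenD (p : ℝ) (φ : ℂ → ℂ) : Prop :=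
  MemSchattenOn MemDStar eDNormSq (compOp φ) p

/-- `C_φ` is a Hilbert–Schmidt operator on `𝒟_*`: it is bounded and
`Σ_n ‖C_φ e_n‖² < ∞` for the orthonormal basis `e_n(z) = zⁿ/√n`, `n ≥ 1`, of `𝒟_*`
(equivalently, for every orthonormal basis). -/
def HilbertSchmidtOnDStar (φ : ℂ → ℂ) : Prop :=
  IsBoundedOpOn MemDStar eDNormSq (compOp φ) ∧
    ∑' n : ℕ, eDNormSq (fun z => φ z ^ (n + 1) / (Real.sqrt (n + 1) : ℂ)) ≠ ⊤

/-- Squared Hardy norm `‖f‖² = sup_{0≤r<1} (1/2π) ∫_0^{2π} |f(r e^{it})|² dt`. -/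
def eHardyNormSq (f : ℂ → ℂ) : ℝ≥0∞ :=
  ⨆ r : Set.Ico (0 : ℝ) 1,
    (∫⁻ t in Set.Ioc 0 (2 * Real.pi),
      ENNReal.ofReal (‖f ((r : ℝ) * Complex.exp (t * Complex.I))‖ ^ 2)) /
        ENNReal.ofReal (2 * Real.pi)

/-- Membership in the Hardy space `H²`. -/
def MemHardy (f : ℂ → ℂ) : Prop := DifferentiableOn ℂ f uD ∧ eHardyNormSq f < ⊤

/-- Squared Bergman norm `‖f‖² = ∫_D |f|² dA`. -/
def eBergNormSq (f : ℂ → ℂ) : ℝ≥0∞ := ∫⁻ z in uD, ENNReal.ofReal (‖f z‖ ^ 2) ∂nA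

/-- Membership in the Bergman space `𝔅²`. -/
def MemBerg (f : ℂ → ℂ) : Prop := DifferentiableOn ℂ f uD ∧ eBergNormSq f < ⊤

/-- The logarithmic energy `I_μ = ∬ log(e/|z−w|) dμ(z) dμ(w)` of a measure on the circle. -/
def eEnergy (μ : Measure ℂ) : ℝ≥0∞ :=
  ∫⁻ z, ∫⁻ w, ENNReal.ofReal (Real.log (Real.exp 1 / dist z w)) ∂μ ∂μ

/-- A Borel set `E` (contained in the unit circle) has logarithmic capacity zero iff
`I_μ = ∞` for every Borel probability measure `μ` with compact support contained in `E`. -/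
def HasLogCapacityZero (E : Set ℂ) : Prop :=
  ∀ μ : Measure ℂ, IsProbabilityMeasure μ →
    (∃ K, IsCompact K ∧ K ⊆ E ∧ μ Kᶜ = 0) → eEnergy μ = ⊤

/-- The weighted Nevanlinna counting function `N_{φ,α}(w) = Σ_{z∈D, φ(z)=w} (1−|z|²)^α`. -/
def nevanlinnaE (φ : ℂ → ℂ) (α : ℝ) (w : ℂ) : ℝ≥0∞ :=
  ∑' z : {z : ℂ // z ∈ uD ∧ φ z = w}, ENNReal.ofReal ((1 - ‖(z : ℂ)‖ ^ 2) ^ α)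

/-- The Carleson window `W(ξ,h)`. -/
def carlesonW (ξ : ℂ) (h : ℝ) : Set ℂ :=
  {w ∈ uD | 1 - ‖w‖ ≤ h ∧ |Complex.arg (w * (starRingEnd ℂ) ξ)| ≤ Real.pi * h}

/-- Argument normalized to lie in `[0, 2π)`. -/
def argNN (z : ℂ) : ℝ :=
  if 0 ≤ Complex.arg z then Complex.arg z else Complex.arg z + 2 * Real.pi

/-- The Hastings–Luecking window `R_{n,j}`. -/
def HLwindow (n j : ℕ) : Set ℂ :=
  {z ∈ uD | 1 - ((2 : ℝ) ^ n)⁻¹ ≤ ‖z‖ ∧ ‖z‖ < 1 - ((2 : ℝ) ^ (n + 1))⁻¹ ∧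
    2 * j * Real.pi / 2 ^ n ≤ argNN z ∧ argNN z < 2 * (j + 1) * Real.pi / 2 ^ n}

/-- `g` is an a.e. radial limit function of `φ`:
for a.e. `t`, `φ(r e^{it}) → g(t)` as `r → 1⁻`. -/
def IsRadialLimit (φ : ℂ → ℂ) (g : ℝ → ℂ) : Prop :=
  ∀ᵐ t : ℝ, Filter.Tendsto (fun r : ℝ => φ ((r : ℂ) * Complex.exp (t * Complex.I)))
    (𝓝[<] (1 : ℝ)) (𝓝 (g t))

/-! ### The logarithm and the cusp map -/

/-- The holomorphic logarithm `L(z) = log (1 / (1 - z))` of the disk. -/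
def Lg (z : ℂ) : ℂ := -Complex.log (1 - z)

/-- The cusp map `σ = L / (2 + L)`. The value at `1`, where `L` has its logarithmic pole (and
`Complex.log 0 = 0` is a junk value), is the limit `1`. -/
def sig (z : ℂ) : ℂ := if z = 1 then 1 else Lg z / (2 + Lg z)

lemma one_sub_re_pos {z : ℂ} (hz : ‖z‖ ≤ 1) (h1 : z ≠ 1) : 0 < (1 - z).re := by
  have h2 : z.re * z.re + z.im * z.im ≤ 1 := by
    have := Complex.normSq_apply z
    rw [Complex.normSq_eq_norm_sq] at this
    nlinarith [norm_nonneg z]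
  simp only [sub_re, one_re]
  by_contra! hc
  apply h1
  have hre : z.re = 1 := by nlinarith [mul_self_nonneg z.im]
  have him : z.im = 0 := by
    rw [hre] at h2
    nlinarith [mul_self_nonneg z.im]
  exact Complex.ext (by simpa using hre) (by simpa using him)

lemma Lg_re (z : ℂ) : (Lg z).re = -Real.log ‖1 - z‖ := by
  simp [Lg, Complex.log_re]

lemma Lg_re_gt {z : ℂ} (hz : ‖z‖ ≤ 1) : -(3 / 4) < (Lg z).re := by
  rw [Lg_re]
  have hl : Real.log 2 < 3 / 4 := by linarith [Real.log_two_lt_d9]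
  rcases eq_or_ne z 1 with rfl | h1
  · norm_num
  have hpos : 0 < ‖1 - z‖ := norm_pos_iff.mpr (sub_ne_zero.mpr h1.symm)
  have hle : ‖1 - z‖ ≤ 2 := (norm_sub_le _ _).trans (by simp; linarith)
  linarith [Real.log_le_log hpos hle]

lemma Lg_im_mem {z : ℂ} (hz : ‖z‖ ≤ 1) (h1 : z ≠ 1) : (Lg z).im ∈ Icc (-2 : ℝ) 2 := by
  have h := Complex.abs_arg_le_pi_div_two_iff.mpr (one_sub_re_pos hz h1).le
  rw [abs_le] at h
  simp only [Lg, neg_im, Complex.log_im, mem_Icc]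
  constructor <;> linarith [Real.pi_le_four]

lemma two_add_Lg_ne {z : ℂ} (hz : ‖z‖ ≤ 1) : 2 + Lg z ≠ 0 := by
  intro h
  have := congrArg Complex.re h
  simp at this
  linarith [Lg_re_gt hz]

lemma norm_two_add_sq (w : ℂ) : ‖2 + w‖ ^ 2 = ‖w‖ ^ 2 + 4 * (1 + w.re) := by
  rw [← Complex.normSq_eq_norm_sq, ← Complex.normSq_eq_norm_sq, Complex.normSq_apply,
    Complex.normSq_apply]
  simp
  ring

lemma one_sub_norm_sig_sq {z : ℂ} (hz : ‖z‖ ≤ 1) (h1 : z ≠ 1) :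
    1 - ‖sig z‖ ^ 2 = 4 * (1 + (Lg z).re) / ‖2 + Lg z‖ ^ 2 := by
  have h0 : ‖2 + Lg z‖ ≠ 0 := norm_ne_zero_iff.mpr (two_add_Lg_ne hz)
  have := norm_two_add_sq (Lg z)
  rw [sig, if_neg h1, norm_div]
  field_simp
  linarith

lemma norm_sig_lt {z : ℂ} (hz : ‖z‖ ≤ 1) (h1 : z ≠ 1) : ‖sig z‖ < 1 := by
  have h := one_sub_norm_sig_sq hz h1
  have h0 : 0 < ‖2 + Lg z‖ := norm_pos_iff.mpr (two_add_Lg_ne hz)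
  have hp : 0 < 4 * (1 + (Lg z).re) / ‖2 + Lg z‖ ^ 2 := by
    have := Lg_re_gt hz
    apply div_pos <;> [linarith; positivity]
  by_contra! hc
  nlinarith

lemma uD_isOpen : IsOpen uD := Metric.isOpen_ball

lemma mem_uD {z : ℂ} : z ∈ uD ↔ ‖z‖ < 1 := by simp [uD]

lemma ne_one_of_mem {z : ℂ} (hz : z ∈ uD) : z ≠ 1 := by
  rintro rfl
  simp [mem_uD] at hz

lemma hasDerivAt_Lg {z : ℂ} (hz : ‖z‖ ≤ 1) (h1 : z ≠ 1) : HasDerivAt Lg (1 / (1 - z)) z := by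
  have h := ((hasDerivAt_id z).const_sub 1).clog
    (Complex.mem_slitPlane_iff.mpr (Or.inl (one_sub_re_pos hz h1)))
  exact (show HasDerivAt Lg _ z from h.neg).congr_deriv (by simp [neg_div])

lemma hasDerivAt_sig {z : ℂ} (hz : ‖z‖ ≤ 1) (h1 : z ≠ 1) :
    HasDerivAt sig (2 * (1 / (1 - z)) / (2 + Lg z) ^ 2) z := by
  have hL := hasDerivAt_Lg hz h1
  have h := hL.div (hL.const_add 2) (two_add_Lg_ne hz)
  have he : sig =ᶠ[𝓝 z] fun w => Lg w / (2 + Lg w) := by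
    filter_upwards [isOpen_ne.mem_nhds h1] with w hw
    exact if_neg hw
  refine (HasDerivAt.congr_of_eventuallyEq h he).congr_deriv ?_
  ring

lemma Lg_injOn : InjOn Lg uD := by
  intro z hz w hw h
  have h' : Complex.log (1 - z) = Complex.log (1 - w) := neg_injective h
  have hz0 : 1 - z ≠ 0 := sub_ne_zero.mpr (ne_one_of_mem hz).symm
  have hw0 : 1 - w ≠ 0 := sub_ne_zero.mpr (ne_one_of_mem hw).symm
  have := congrArg Complex.exp h'
  rw [Complex.exp_log hz0, Complex.exp_log hw0] at this
  exact sub_right_injective this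

lemma sig_injOn : InjOn sig uD := by
  intro z hz w hw h
  apply Lg_injOn hz hw
  rw [sig, sig, if_neg (ne_one_of_mem hz), if_neg (ne_one_of_mem hw),
    div_eq_div_iff (two_add_Lg_ne (mem_uD.mp hz).le) (two_add_Lg_ne (mem_uD.mp hw).le)] at h
  linear_combination h / 2

lemma sig_zero : sig 0 = 0 := by simp [sig, Lg]

lemma sig_mapsTo : MapsTo sig uD uD := fun _ hz =>
  mem_uD.mpr (norm_sig_lt (mem_uD.mp hz).le (ne_one_of_mem hz))

lemma sig_differentiableOn : DifferentiableOn ℂ sig uD := fun _ hz =>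
  (hasDerivAt_sig (mem_uD.mp hz).le
    (ne_one_of_mem hz)).differentiableAt.differentiableWithinAt

lemma sig_continuousOn : ContinuousOn sig (Metric.closedBall (0 : ℂ) 1) := by
  intro z hz
  have hz' : ‖z‖ ≤ 1 := by simpa using hz
  rcases eq_or_ne z 1 with rfl | h1
  · rw [← continuousWithinAt_sdiff_self]
    have hlim : Tendsto (fun w : ℂ => (Lg w).re) (𝓝[Metric.closedBall (0 : ℂ) 1 \ {1}] 1) atTop := by
      simp_rw [Lg_re]
      refine tendsto_neg_atBot_atTop.comp (Real.tendsto_log_nhdsGT_zero.comp ?_)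
      refine tendsto_nhdsWithin_iff.mpr ⟨?_, ?_⟩
      · have : Tendsto (fun w : ℂ => ‖1 - w‖) (𝓝 1) (𝓝 ‖(1 : ℂ) - 1‖) :=
          (Continuous.norm (by fun_prop)).tendsto 1
        simp only [sub_self, norm_zero] at this
        exact this.mono_left nhdsWithin_le_nhds
      · filter_upwards [self_mem_nhdsWithin] with w hw
        exact norm_pos_iff.mpr (sub_ne_zero.mpr (Ne.symm hw.2))
    -- `1 - σ = 2 / (2 + L)`, and `|2 + L| ≥ 2 + Re L → ∞` at `1`.
    have hb : Tendsto (fun w : ℂ => 2 / (2 + (Lg w).re))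
        (𝓝[Metric.closedBall (0 : ℂ) 1 \ {1}] 1) (𝓝 0) :=
      (tendsto_atTop_add_const_left _ 2 hlim).const_div_atTop 2
    rw [ContinuousWithinAt, tendsto_iff_norm_sub_tendsto_zero]
    refine squeeze_zero' (Eventually.of_forall fun _ => norm_nonneg _) ?_ hb
    filter_upwards [self_mem_nhdsWithin] with w hw
    have hw' : ‖w‖ ≤ 1 := by simpa using hw.1
    have hne := two_add_Lg_ne hw'
    have hs : sig w - sig 1 = -(2 / (2 + Lg w)) := by
      have hw1 : w ≠ 1 := hw.2
      rw [sig, sig, if_neg hw1, if_pos rfl]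
      field_simp
      ring
    have hre : 2 + (Lg w).re ≤ ‖2 + Lg w‖ := by
      simpa using Complex.re_le_norm (2 + Lg w)
    have hp := Lg_re_gt hw'
    rw [hs, norm_neg, norm_div, Complex.norm_ofNat]
    exact div_le_div_of_nonneg_left (by norm_num) (by linarith) hre
  · exact (hasDerivAt_sig hz' h1).continuousAt.continuousWithinAt

/-! ### Change of variables -/

/-- Area formula for an injective holomorphic map: its real Jacobian is `‖g'‖²`. -/
lemma lintegral_image_holo {g g' : ℂ → ℂ} (hg : ∀ z ∈ uD, HasDerivAt g (g' z) z)
    (hinj : InjOn g uD) (F : ℂ → ℝ≥0∞) :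
    ∫⁻ w in g '' uD, F w = ∫⁻ z in uD, ENNReal.ofReal (‖g' z‖ ^ 2) * F (g z) := by
  have hfd : ∀ z ∈ uD, HasFDerivWithinAt g
      ((ContinuousLinearMap.toSpanSingleton ℂ (g' z)).restrictScalars ℝ) uD z := fun z hz =>
    ((hg z hz).hasFDerivAt.restrictScalars ℝ).hasFDerivWithinAt
  rw [lintegral_image_eq_lintegral_abs_det_fderiv_mul volume uD_isOpen.measurableSet hfd
    hinj F]
  refine lintegral_congr fun z => ?_
  congr 2
  simp [ContinuousLinearMap.det, LinearMap.det_restrictScalars, Algebra.norm_complex_eq,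
    Complex.normSq_eq_norm_sq]

lemma lintegral_nA (s : Set ℂ) (F : ℂ → ℝ≥0∞) :
    ∫⁻ z in s, F z ∂nA = (ENNReal.ofReal Real.pi)⁻¹ * ∫⁻ z in s, F z := by
  rw [nA, Measure.restrict_smul, lintegral_smul_measure, smul_eq_mul]

lemma inv_pi_ne_top : (ENNReal.ofReal Real.pi)⁻¹ ≠ ⊤ := by
  simp [Real.pi_pos]

lemma eDNormSq_eq (f : ℂ → ℂ) : eDNormSq f = ENNReal.ofReal (‖f 0‖ ^ 2) +
    (ENNReal.ofReal Real.pi)⁻¹ * ∫⁻ z in uD, ENNReal.ofReal (‖deriv f z‖ ^ 2) := by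
  simp [eDNormSq, eDNormSqW, lintegral_nA]

/-- `C_σ` is a contraction of `𝒟_*`, because `σ` is univalent. -/
lemma eDNormSq_comp_le {f : ℂ → ℂ} (hf : MemDStar f) :
    eDNormSq (compOp sig f) ≤ eDNormSq f := by
  rw [eDNormSq_eq, eDNormSq_eq]
  have h0 : compOp sig f 0 = f 0 := by simp [compOp, sig_zero]
  rw [h0]
  gcongr _ + _ * ?_
  have hd : ∀ z ∈ uD, ENNReal.ofReal (‖deriv (compOp sig f) z‖ ^ 2) =
      ENNReal.ofReal (‖deriv sig z‖ ^ 2) * ENNReal.ofReal (‖deriv f (sig z)‖ ^ 2) := by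
    intro z hz
    have h1 : DifferentiableAt ℂ f (sig z) :=
      hf.1.1.differentiableAt (uD_isOpen.mem_nhds (sig_mapsTo hz))
    have h2 : DifferentiableAt ℂ sig z :=
      sig_differentiableOn.differentiableAt (uD_isOpen.mem_nhds hz)
    have h3 : deriv (compOp sig f) z = deriv f (sig z) * deriv sig z :=
      (h1.hasDerivAt.comp z h2.hasDerivAt).deriv
    rw [h3, ← ENNReal.ofReal_mul (by positivity), norm_mul]
    congr 1
    ring
  rw [setLIntegral_congr_fun uD_isOpen.measurableSet hd,
    ← lintegral_image_holo (g := sig) (g' := deriv sig) (fun z hz =>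
      (sig_differentiableOn.differentiableAt (uD_isOpen.mem_nhds hz)).hasDerivAt)
      sig_injOn (fun w => ENNReal.ofReal (‖deriv f w‖ ^ 2))]
  exact lintegral_mono_set sig_mapsTo.image_subset

lemma sig_bounded : IsBoundedOpOn MemDStar eDNormSq (compOp sig) := by
  refine ⟨fun f hf => ⟨⟨hf.1.1.comp sig_differentiableOn sig_mapsTo, ?_⟩, ?_⟩, ?_⟩
  · exact (eDNormSq_comp_le hf).trans_lt hf.1.2
  · simpa [compOp, sig_zero] using hf.2
  · refine ne_top_of_le_ne_top ENNReal.one_ne_top (sInf_le fun f hf => ?_)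
    simpa using eDNormSq_comp_le hf

/-! ### The Hilbert–Schmidt sum -/

/-- The weight `(1 + Re w)⁻²` on the half-strip `Re w > -3/4`, `|Im w| ≤ 2` containing `L(D)`,
extended by zero. -/
def stripWeight (w : ℂ) : ℝ≥0∞ :=
  (Ioi (-(3 / 4) : ℝ)).indicator (fun x : ℝ => ENNReal.ofReal ((x + 1) ^ (-2 : ℝ))) w.re *
    (Icc (-2 : ℝ) 2).indicator 1 w.im

lemma lintegral_stripWeight_ne_top : ∫⁻ w, stripWeight w ≠ ⊤ := by
  have h1 : ∫⁻ w : ℂ, stripWeight w = ∫⁻ p : ℝ × ℝ,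
      (Ioi (-(3 / 4) : ℝ)).indicator (fun x : ℝ => ENNReal.ofReal ((x + 1) ^ (-2 : ℝ))) p.1 *
        (Icc (-2 : ℝ) 2).indicator 1 p.2 :=
    Complex.volume_preserving_equiv_real_prod.lintegral_comp_emb
      measurableEquivRealProd.measurableEmbedding (fun p : ℝ × ℝ =>
        (Ioi (-(3 / 4) : ℝ)).indicator (fun x : ℝ => ENNReal.ofReal ((x + 1) ^ (-2 : ℝ))) p.1 *
          (Icc (-2 : ℝ) 2).indicator 1 p.2)
  rw [h1, Measure.volume_eq_prod, lintegral_prod_mul]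
  · refine ENNReal.mul_ne_top ?_ ?_
    · rw [lintegral_indicator measurableSet_Ioi]
      exact (integrableOn_add_rpow_Ioi_of_lt (by norm_num) (by norm_num)).lintegral_lt_top.ne
    · rw [lintegral_indicator_one measurableSet_Icc]
      simp
  · exact (Measurable.indicator (by fun_prop) measurableSet_Ioi).aemeasurable
  · exact (measurable_one.indicator measurableSet_Icc).aemeasurable

lemma norm_deriv_sig_pow {z : ℂ} (hz : z ∈ uD) (n : ℕ) :
    ‖deriv (fun z => sig z ^ (n + 1) / (Real.sqrt (n + 1) : ℂ)) z‖ ^ 2 =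
      ‖deriv sig z‖ ^ 2 * (((n + 1).choose 1 : ℕ) * (‖sig z‖ ^ 2) ^ n) := by
  have h2 : DifferentiableAt ℂ sig z :=
    sig_differentiableOn.differentiableAt (uD_isOpen.mem_nhds hz)
  have h3 : HasDerivAt (fun z => sig z ^ (n + 1) / (Real.sqrt (n + 1) : ℂ)) _ z :=
    (h2.hasDerivAt.pow (n + 1)).div_const _
  rw [h3.deriv]
  have hn : (0 : ℝ) ≤ n + 1 := by positivity
  have hn' : ‖(n : ℂ) + 1‖ = n + 1 := by exact_mod_cast Complex.norm_natCast (n + 1)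
  simp only [norm_div, norm_mul, norm_pow, div_pow, Complex.norm_real, Real.norm_eq_abs, sq_abs,
    Real.sq_sqrt hn, Nat.choose_one_right, Nat.cast_add, Nat.cast_one, Nat.add_sub_cancel, hn',
    mul_pow]
  field_simp
  ring

/-- The Hilbert–Schmidt density is `|σ'|² / (1 - |σ|²)² = |L'|² / (4 (1 + Re L)²)`; the factor `1 / 4` is
dropped. -/
lemma tsum_sig_le {z : ℂ} (hz : z ∈ uD) :
    ∑' n : ℕ, ENNReal.ofReal
        (‖deriv (fun z => sig z ^ (n + 1) / (Real.sqrt (n + 1) : ℂ)) z‖ ^ 2) ≤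
      ENNReal.ofReal (‖1 / (1 - z)‖ ^ 2) * stripWeight (Lg z) := by
  have hz' := (mem_uD.mp hz).le
  have h1 := ne_one_of_mem hz
  have hre := Lg_re_gt hz'
  have hlt := norm_sig_lt hz' h1
  have hr : ‖‖sig z‖ ^ 2‖ < 1 := by
    rw [Real.norm_eq_abs, abs_of_nonneg (by positivity)]
    nlinarith [norm_nonneg (sig z)]
  have hsum := (hasSum_choose_mul_geometric_of_norm_lt_one 1 hr).mul_left (‖deriv sig z‖ ^ 2)
  simp_rw [norm_deriv_sig_pow hz]
  rw [← ENNReal.ofReal_tsum_of_nonneg (fun n => by positivity) hsum.summable, hsum.tsum_eq,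
    stripWeight, indicator_of_mem (mem_Ioi.mpr hre), indicator_of_mem (Lg_im_mem hz' h1),
    Pi.one_apply, mul_one, ← ENNReal.ofReal_mul (by positivity)]
  apply ENNReal.ofReal_le_ofReal
  have h0 : 0 < ‖2 + Lg z‖ := norm_pos_iff.mpr (two_add_Lg_ne hz')
  have hp : 0 < 1 + (Lg z).re := by linarith
  rw [one_sub_norm_sig_sq hz' h1, (hasDerivAt_sig hz' h1).deriv, Real.rpow_neg (by linarith),
    Real.rpow_two, norm_div, norm_mul, norm_pow, Complex.norm_ofNat, add_comm (Lg z).re 1]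
  generalize ‖1 / (1 - z)‖ = a
  generalize ‖2 + Lg z‖ = b at h0
  have he : (2 * a / b ^ 2) ^ 2 * (1 / (4 * (1 + (Lg z).re) / b ^ 2) ^ (1 + 1)) =
      1 / 4 * (a ^ 2 * ((1 + (Lg z).re) ^ 2)⁻¹) := by
    rw [one_add_one_eq_two]
    field_simp
    ring
  rw [he]
  have : 0 ≤ a ^ 2 * ((1 + (Lg z).re) ^ 2)⁻¹ := by positivity
  linarith

lemma sig_hs_sum :
    ∑' n : ℕ, eDNormSq (fun z => sig z ^ (n + 1) / (Real.sqrt (n + 1) : ℂ)) ≠ ⊤ := by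
  simp_rw [eDNormSq_eq, sig_zero]
  simp only [ne_eq, Nat.add_eq_zero_iff, one_ne_zero, and_false, not_false_eq_true, zero_pow,
    zero_div, norm_zero, OfNat.ofNat_ne_zero, ENNReal.ofReal_zero, zero_add]
  rw [ENNReal.tsum_mul_left, ← lintegral_tsum]
  · refine ENNReal.mul_ne_top inv_pi_ne_top ?_
    refine ne_top_of_le_ne_top lintegral_stripWeight_ne_top ?_
    calc _ ≤ ∫⁻ z in uD, ENNReal.ofReal (‖1 / (1 - z)‖ ^ 2) * stripWeight (Lg z) :=
          setLIntegral_mono' uD_isOpen.measurableSet fun z hz => tsum_sig_le hz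
      _ = ∫⁻ w in Lg '' uD, stripWeight w :=
          (lintegral_image_holo (fun z hz => hasDerivAt_Lg (mem_uD.mp hz).le (ne_one_of_mem hz))
            Lg_injOn _).symm
      _ ≤ _ := setLIntegral_le_lintegral _ _
  · intro n
    exact (ENNReal.measurable_ofReal.comp
      ((measurable_deriv _).norm.pow_const 2)).aemeasurable

lemma sig_memDStar : MemDStar sig := by
  refine ⟨⟨sig_differentiableOn, ?_⟩, sig_zero⟩
  -- `σ` is the first term of the Hilbert–Schmidt sum.
  have h := ENNReal.ne_top_of_tsum_ne_top sig_hs_sum 0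
  simp only [zero_add, pow_one, Nat.cast_zero, Real.sqrt_one, Complex.ofReal_one, div_one] at h
  exact h.lt_top

/- STATEMENT 2 -/
theorem stmt2 :
    ∃ σ : ℂ → ℂ, IsSchur σ ∧ σ 0 = 0 ∧ MemDStar σ ∧
      ContinuousOn σ (Metric.closedBall (0 : ℂ) 1) ∧ σ 1 = 1 ∧
      (∀ ξ : ℂ, ‖ξ‖ = 1 → ξ ≠ 1 → ‖σ ξ‖ < 1) ∧
      HilbertSchmidtOnDStar σ := by
  exact ⟨sig, ⟨sig_differentiableOn, sig_mapsTo⟩, sig_zero, sig_memDStar, sig_continuousOn,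
    if_pos rfl, fun ξ hξ h1 => norm_sig_lt hξ.le h1, sig_bounded, sig_hs_sum⟩

end
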